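/- arXiv:1903.12512 — 9 statements merged into one kernel-verified Lean document; each statement's English description precedes it below -/
import Mathlib

section
/- Let k be a field, A an associative unital k-algebra, and Δ a nearly Frobenius coproduct on A. Then Δ is coassociative: (Δ ⊗ id_A) ∘ Δ = (id_A ⊗ Δ) ∘ Δ as linear maps A → A ⊗[k] A ⊗[k] A. -/
open TensorProduct

/-- A nearly Frobenius coproduct on a `k`-algebra `A`: a `k`-linear map
`Δ : A → A ⊗[k] A` which is a morphism of `A`-bimodules, i.e.
`Δ (a * b) = (a ⊗ 1) * Δ b` and `Δ (a * b) = Δ a * (1 ⊗ b)`. -/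
def IsNearlyFrobenius (k A : Type*) [Field k] [Ring A] [Algebra k A]
    (Δ : A →ₗ[k] A ⊗[k] A) : Prop :=
  ∀ a b : A, Δ (a * b) = (a ⊗ₜ[k] (1 : A)) * Δ b ∧ Δ (a * b) = Δ a * ((1 : A) ⊗ₜ[k] b)

/-!
Let `f : A → M ⊗ A` be right `A`-linear and `g : A → A ⊗ N` left `A`-linear, and write
`f 1 = ∑ mᵢ ⊗ cᵢ`. Right linearity of `f` gives `(f ⊗ id) t = ∑ mᵢ ⊗ cᵢ • t` for every `t : A ⊗ N`;
at `t = g a`, left linearity of `g` turns this into `∑ mᵢ ⊗ g (cᵢ * a) = (id ⊗ g) (f a)`.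
Coassociativity is the case `f = g = Δ`.
-/

section Algebra

variable {R A B : Type*} [CommSemiring R] [Semiring A] [Algebra R A] [Semiring B] [Algebra R B]

theorem tmul_one_mul_eq_smul (a : A) (t : A ⊗[R] B) : (a ⊗ₜ[R] (1 : B)) * t = a • t := by
  have tmul_one : a ⊗ₜ[R] (1 : B) = a • (1 : A ⊗[R] B) := by
    rw [Algebra.TensorProduct.one_def, smul_tmul', smul_eq_mul, mul_one]
  rw [tmul_one, smul_one_mul]

theorem mul_one_tmul_eq_lTensor_mulRight (t : A ⊗[R] B) (b : B) :
    t * ((1 : A) ⊗ₜ[R] b) = (LinearMap.mulRight R b).lTensor A t := by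
  rw [← LinearMap.mulRight_apply (R := R), LinearMap.mulRight_tmul, LinearMap.mulRight_one,
    LinearMap.lTensor_def]

end Algebra

section Module

variable {R A M N : Type*} [CommSemiring R] [Semiring A] [Algebra R A]
  [AddCommMonoid M] [Module R M] [AddCommMonoid N] [Module R N]

theorem assoc_lTensor_mulRight_tmul (s : M ⊗[R] A) (x : A) (n : N) :
    TensorProduct.assoc R M A N ((LinearMap.mulRight R x).lTensor M s ⊗ₜ n) =
      ((LinearMap.toSpanSingleton A (A ⊗[R] N) (x ⊗ₜ n)).restrictScalars R).lTensor M s := by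
  induction s with
  | zero => simp
  | tmul m c => simp [smul_tmul']
  | add s s' hs hs' => simp only [map_add, add_tmul, hs, hs']

theorem assoc_rTensor_eq_lTensor_toSpanSingleton {f : A →ₗ[R] M ⊗[R] A}
    (hf : ∀ a b, f (a * b) = (LinearMap.mulRight R b).lTensor M (f a)) (t : A ⊗[R] N) :
    TensorProduct.assoc R M A N (f.rTensor N t) =
      ((LinearMap.toSpanSingleton A (A ⊗[R] N) t).restrictScalars R).lTensor M (f 1) := by
  induction t with
  | zero => simp
  | tmul x n =>
    have hfx : f x = (LinearMap.mulRight R x).lTensor M (f 1) := by rw [← hf, one_mul]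
    rw [LinearMap.rTensor_tmul, hfx, assoc_lTensor_mulRight_tmul]
  | add t t' ht ht' =>
    rw [map_add, map_add, ht, ht', LinearMap.toSpanSingleton_add, LinearMap.restrictScalars_add,
      LinearMap.lTensor_add, LinearMap.add_apply]

theorem nearlyFrobenius_coassoc_general {f : A →ₗ[R] M ⊗[R] A} {g : A →ₗ[R] A ⊗[R] N}
    (hf : ∀ a b, f (a * b) = (LinearMap.mulRight R b).lTensor M (f a))
    (hg : ∀ a b, g (a * b) = a • g b) :
    (TensorProduct.assoc R M A N).toLinearMap ∘ₗ f.rTensor N ∘ₗ g = g.lTensor M ∘ₗ f := by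
  ext a
  have span_eq : (LinearMap.toSpanSingleton A (A ⊗[R] N) (g a)).restrictScalars R =
      g ∘ₗ LinearMap.mulRight R a :=
    LinearMap.ext fun c => (hg c a).symm
  calc
    TensorProduct.assoc R M A N (f.rTensor N (g a))
      = ((LinearMap.toSpanSingleton A (A ⊗[R] N) (g a)).restrictScalars R).lTensor M (f 1) :=
        assoc_rTensor_eq_lTensor_toSpanSingleton hf (g a)
    _ = g.lTensor M ((LinearMap.mulRight R a).lTensor M (f 1)) := by
        rw [span_eq, LinearMap.lTensor_comp_apply]
    _ = g.lTensor M (f a) := by rw [← hf, one_mul]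

end Module

/-- Every nearly Frobenius coproduct is coassociative:
`(Δ ⊗ id) ∘ Δ = (id ⊗ Δ) ∘ Δ` (up to the canonical associator). -/
theorem nearlyFrobenius_coassoc (k A : Type*) [Field k] [Ring A] [Algebra k A]
    (Δ : A →ₗ[k] A ⊗[k] A) (hΔ : IsNearlyFrobenius k A Δ) :
    (TensorProduct.assoc k A A A).toLinearMap ∘ₗ
        (TensorProduct.map Δ LinearMap.id) ∘ₗ Δ =
      (TensorProduct.map LinearMap.id Δ) ∘ₗ Δ :=
  nearlyFrobenius_coassoc_general
    (fun a b => (hΔ a b).2.trans (mul_one_tmul_eq_lTensor_mulRight (Δ a) b))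
    (fun a b => (hΔ a b).1.trans (tmul_one_mul_eq_smul a (Δ b)))
end

section
/- Let (A, Δ_A) and (B, Δ_B) be nearly Frobenius algebras over k, and let A × B be the product algebra with componentwise operations. Let ι_A : A → A × B, a ↦ (a, 0) and ι_B : B → A × B, b ↦ (0, b) be the canonical k-linear inclusions and π_A, π_B the projections. Then the k-linear map Δ := (ι_A ⊗ ι_A) ∘ Δ_A ∘ π_A + (ι_B ⊗ ι_B) ∘ Δ_B ∘ π_B : A × B → (A × B) ⊗[k] (A × B) is a nearly Frobenius coproduct on A × B. -/
open TensorProduct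

section TensorMap

variable {R A B C D : Type*} [CommSemiring R]
  [NonUnitalNonAssocSemiring A] [Module R A] [SMulCommClass R A A] [IsScalarTower R A A]
  [NonUnitalNonAssocSemiring B] [Module R B] [SMulCommClass R B B] [IsScalarTower R B B]
  [NonUnitalNonAssocSemiring C] [Module R C] [SMulCommClass R C C] [IsScalarTower R C C]
  [NonUnitalNonAssocSemiring D] [Module R D] [SMulCommClass R D D] [IsScalarTower R D D]

theorem tensorMap_tmul_mul {f : A →ₗ[R] C} {g : B →ₗ[R] D} {a : A} {b : B} {c : C} {d : D}
    (hf : ∀ x, f (a * x) = c * f x) (hg : ∀ y, g (b * y) = d * g y) (t : A ⊗[R] B) :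
    TensorProduct.map f g (a ⊗ₜ b * t) = c ⊗ₜ d * TensorProduct.map f g t := by
  induction t with
  | zero => simp only [mul_zero, map_zero]
  | add s t hs ht => simp only [mul_add, map_add, hs, ht]
  | tmul x y => simp only [Algebra.TensorProduct.tmul_mul_tmul, TensorProduct.map_tmul, hf, hg]

theorem tensorMap_mul_tmul {f : A →ₗ[R] C} {g : B →ₗ[R] D} {a : A} {b : B} {c : C} {d : D}
    (hf : ∀ x, f (x * a) = f x * c) (hg : ∀ y, g (y * b) = g y * d) (t : A ⊗[R] B) :
    TensorProduct.map f g (t * a ⊗ₜ b) = TensorProduct.map f g t * c ⊗ₜ d := by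
  induction t with
  | zero => simp only [zero_mul, map_zero]
  | add s t hs ht => simp only [add_mul, map_add, hs, ht]
  | tmul x y => simp only [Algebra.TensorProduct.tmul_mul_tmul, TensorProduct.map_tmul, hf, hg]

end TensorMap

namespace IsNearlyFrobenius

variable {k A C : Type*} [Field k] [Ring A] [Algebra k A] [Ring C] [Algebra k C]

theorem add {Δ₁ Δ₂ : A →ₗ[k] A ⊗[k] A} (h₁ : IsNearlyFrobenius k A Δ₁)
    (h₂ : IsNearlyFrobenius k A Δ₂) : IsNearlyFrobenius k A (Δ₁ + Δ₂) := fun a b => by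
  simp only [LinearMap.add_apply]
  exact ⟨by rw [(h₁ a b).1, (h₂ a b).1, mul_add], by rw [(h₁ a b).2, (h₂ a b).2, add_mul]⟩

-- `hl` and `hr` make `ι` a map of `C`-bimodules, where `C` acts on `A` through `π`.
theorem map_comp_comp {Δ : A →ₗ[k] A ⊗[k] A} (hΔ : IsNearlyFrobenius k A Δ)
    (π : C →ₙₐ[k] A) (ι : A →ₗ[k] C)
    (hl : ∀ c a, ι (π c * a) = c * ι a) (hr : ∀ a c, ι (a * π c) = ι a * c) :
    IsNearlyFrobenius k C (TensorProduct.map ι ι ∘ₗ Δ ∘ₗ (π : C →ₗ[k] A)) := fun c d => by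
  have ι_one_mul (a : A) : ι (1 * a) = 1 * ι a := by rw [one_mul, one_mul]
  have ι_mul_one (a : A) : ι (a * 1) = ι a * 1 := by rw [mul_one, mul_one]
  constructor
  · calc TensorProduct.map ι ι (Δ (π (c * d)))
        = TensorProduct.map ι ι (π c ⊗ₜ 1 * Δ (π d)) := by rw [map_mul, (hΔ _ _).1]
      _ = c ⊗ₜ 1 * TensorProduct.map ι ι (Δ (π d)) := tensorMap_tmul_mul (hl c) ι_one_mul _
  · calc TensorProduct.map ι ι (Δ (π (c * d)))
        = TensorProduct.map ι ι (Δ (π c) * 1 ⊗ₜ π d) := by rw [map_mul, (hΔ _ _).2]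
      _ = TensorProduct.map ι ι (Δ (π c)) * 1 ⊗ₜ d := tensorMap_mul_tmul ι_mul_one (hr · d) _

end IsNearlyFrobenius

/-- the coproduct `(ι_A ⊗ ι_A) ∘ Δ_A ∘ π_A + (ι_B ⊗ ι_B) ∘ Δ_B ∘ π_B`
on the product algebra `A × B` is nearly Frobenius. -/
theorem isNearlyFrobenius_prod (k A B : Type*) [Field k]
    [Ring A] [Algebra k A] [Ring B] [Algebra k B]
    (ΔA : A →ₗ[k] A ⊗[k] A) (hΔA : IsNearlyFrobenius k A ΔA)
    (ΔB : B →ₗ[k] B ⊗[k] B) (hΔB : IsNearlyFrobenius k B ΔB) :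
    IsNearlyFrobenius k (A × B)
      (TensorProduct.map (LinearMap.inl k A B) (LinearMap.inl k A B) ∘ₗ
          ΔA ∘ₗ LinearMap.fst k A B +
        TensorProduct.map (LinearMap.inr k A B) (LinearMap.inr k A B) ∘ₗ
          ΔB ∘ₗ LinearMap.snd k A B) := by
  have inl_fst_mul (p : A × B) (a : A) :
      LinearMap.inl k A B (p.1 * a) = p * LinearMap.inl k A B a := by ext <;> simp
  have inl_mul_fst (a : A) (p : A × B) :
      LinearMap.inl k A B (a * p.1) = LinearMap.inl k A B a * p := by ext <;> simp
  have inr_snd_mul (p : A × B) (b : B) :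
      LinearMap.inr k A B (p.2 * b) = p * LinearMap.inr k A B b := by ext <;> simp
  have inr_mul_snd (b : B) (p : A × B) :
      LinearMap.inr k A B (b * p.2) = LinearMap.inr k A B b * p := by ext <;> simp
  exact (hΔA.map_comp_comp (NonUnitalAlgHom.fst k A B) _ inl_fst_mul inl_mul_fst).add
    (hΔB.map_comp_comp (NonUnitalAlgHom.snd k A B) _ inr_snd_mul inr_mul_snd)
end

section
/- Let (A, Δ_A) and (B, Δ_B) be nearly Frobenius algebras over k, and let τ : (A ⊗[k] A) ⊗[k] (B ⊗[k] B) → (A ⊗[k] B) ⊗[k] (A ⊗[k] B) be the middle-interchange (tensor-tensor-tensor commutativity) isomorphism. Then Δ := τ ∘ (Δ_A ⊗ Δ_B) is a nearly Frobenius coproduct on the tensor product algebra A ⊗[k] B. -/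
open TensorProduct

/-!
Each of the two conditions on a coproduct is an identity `f (a * b) = g a * h b` between linear
maps: the first with `g a = a ⊗ 1` and `h = f`, the second with `g = f` and `h b = 1 ⊗ b`. Such
identities are stable under tensor products of maps, and the interchange `τ` is an algebra
isomorphism sending `(a ⊗ 1) ⊗ (b ⊗ 1)` to `(a ⊗ b) ⊗ 1` and `(1 ⊗ a) ⊗ (1 ⊗ b)` to
`1 ⊗ (a ⊗ b)`.
-/

section Interchange

variable {R M N P Q : Type*} [CommSemiring R] [AddCommMonoid M] [Module R M]
  [AddCommMonoid N] [Module R N] [AddCommMonoid P] [Module R P] [AddCommMonoid Q] [Module R Q]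

theorem tensorTensorTensorComm_map_mk_flip (p : P) (q : Q) (x : M ⊗[R] N) :
    TensorProduct.tensorTensorTensorComm R M P N Q
        (TensorProduct.map ((TensorProduct.mk R M P).flip p) ((TensorProduct.mk R N Q).flip q) x) =
      x ⊗ₜ (p ⊗ₜ q) := by
  suffices (TensorProduct.tensorTensorTensorComm R M P N Q).toLinearMap ∘ₗ
      TensorProduct.map ((TensorProduct.mk R M P).flip p) ((TensorProduct.mk R N Q).flip q) =
        (TensorProduct.mk R (M ⊗[R] N) (P ⊗[R] Q)).flip (p ⊗ₜ q) from
    LinearMap.congr_fun this x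
  ext m n
  rfl

theorem tensorTensorTensorComm_map_mk (m : M) (n : N) (x : P ⊗[R] Q) :
    TensorProduct.tensorTensorTensorComm R M P N Q
        (TensorProduct.map (TensorProduct.mk R M P m) (TensorProduct.mk R N Q n) x) =
      (m ⊗ₜ n) ⊗ₜ x := by
  suffices (TensorProduct.tensorTensorTensorComm R M P N Q).toLinearMap ∘ₗ
      TensorProduct.map (TensorProduct.mk R M P m) (TensorProduct.mk R N Q n) =
        TensorProduct.mk R (M ⊗[R] N) (P ⊗[R] Q) (m ⊗ₜ n) from
    LinearMap.congr_fun this x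
  ext p q
  rfl

end Interchange

section MapMul

variable {R A B C D : Type*} [CommSemiring R]
  [NonUnitalNonAssocSemiring A] [Module R A] [SMulCommClass R A A] [IsScalarTower R A A]
  [NonUnitalNonAssocSemiring B] [Module R B] [SMulCommClass R B B] [IsScalarTower R B B]
  [NonUnitalNonAssocSemiring C] [Module R C] [SMulCommClass R C C] [IsScalarTower R C C]
  [NonUnitalNonAssocSemiring D] [Module R D] [SMulCommClass R D D] [IsScalarTower R D D]

theorem tensorMap_mul_eq_mul {f g h : A →ₗ[R] C} {f' g' h' : B →ₗ[R] D}
    (hf : ∀ a₁ a₂, f (a₁ * a₂) = g a₁ * h a₂) (hf' : ∀ b₁ b₂, f' (b₁ * b₂) = g' b₁ * h' b₂)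
    (x y : A ⊗[R] B) :
    TensorProduct.map f f' (x * y) = TensorProduct.map g g' x * TensorProduct.map h h' y := by
  suffices (LinearMap.mul R (A ⊗[R] B)).compr₂ (TensorProduct.map f f') =
      (LinearMap.mul R (C ⊗[R] D)).compl₁₂ (TensorProduct.map g g') (TensorProduct.map h h') from
    LinearMap.congr_fun₂ this x y
  ext a₁ b₁ a₂ b₂
  simp [hf, hf']

end MapMul

section Coproduct

variable {R A B C D : Type*} [CommSemiring R] [Semiring A] [Algebra R A] [Semiring B] [Algebra R B]
  [Semiring C] [Algebra R C] [Semiring D] [Algebra R D]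

theorem tensorTensorTensorComm_mul (x y : (A ⊗[R] C) ⊗[R] (B ⊗[R] D)) :
    TensorProduct.tensorTensorTensorComm R A C B D (x * y) =
      TensorProduct.tensorTensorTensorComm R A C B D x *
        TensorProduct.tensorTensorTensorComm R A C B D y :=
  map_mul (Algebra.TensorProduct.tensorTensorTensorComm R R R R A C B D) x y

theorem tensorTensorTensorComm_map_mul_left {f : A →ₗ[R] A ⊗[R] C} {g : B →ₗ[R] B ⊗[R] D}
    (hf : ∀ a₁ a₂, f (a₁ * a₂) = (a₁ ⊗ₜ 1) * f a₂)
    (hg : ∀ b₁ b₂, g (b₁ * b₂) = (b₁ ⊗ₜ 1) * g b₂) (x y : A ⊗[R] B) :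
    TensorProduct.tensorTensorTensorComm R A C B D (TensorProduct.map f g (x * y)) =
      (x ⊗ₜ 1) * TensorProduct.tensorTensorTensorComm R A C B D (TensorProduct.map f g y) := by
  rw [tensorMap_mul_eq_mul (g := (TensorProduct.mk R A C).flip 1)
      (g' := (TensorProduct.mk R B D).flip 1) hf hg,
    tensorTensorTensorComm_mul, tensorTensorTensorComm_map_mk_flip, Algebra.TensorProduct.one_def]

theorem tensorTensorTensorComm_map_mul_right {f : C →ₗ[R] A ⊗[R] C} {g : D →ₗ[R] B ⊗[R] D}
    (hf : ∀ c₁ c₂, f (c₁ * c₂) = f c₁ * (1 ⊗ₜ c₂))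
    (hg : ∀ d₁ d₂, g (d₁ * d₂) = g d₁ * (1 ⊗ₜ d₂)) (x y : C ⊗[R] D) :
    TensorProduct.tensorTensorTensorComm R A C B D (TensorProduct.map f g (x * y)) =
      TensorProduct.tensorTensorTensorComm R A C B D (TensorProduct.map f g x) * (1 ⊗ₜ y) := by
  rw [tensorMap_mul_eq_mul (h := TensorProduct.mk R A C 1) (h' := TensorProduct.mk R B D 1) hf hg,
    tensorTensorTensorComm_mul, tensorTensorTensorComm_map_mk, Algebra.TensorProduct.one_def]

-- The conditions are spelled out because `IsNearlyFrobenius` is only defined over a field.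
theorem isNearlyFrobenius_tensor_general {ΔA : A →ₗ[R] A ⊗[R] A} {ΔB : B →ₗ[R] B ⊗[R] B}
    (hΔA : ∀ a b : A, ΔA (a * b) = (a ⊗ₜ 1) * ΔA b ∧ ΔA (a * b) = ΔA a * (1 ⊗ₜ b))
    (hΔB : ∀ a b : B, ΔB (a * b) = (a ⊗ₜ 1) * ΔB b ∧ ΔB (a * b) = ΔB a * (1 ⊗ₜ b))
    (x y : A ⊗[R] B) :
    let Δ := (TensorProduct.tensorTensorTensorComm R A A B B).toLinearMap ∘ₗ
      TensorProduct.map ΔA ΔB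
    Δ (x * y) = (x ⊗ₜ 1) * Δ y ∧ Δ (x * y) = Δ x * (1 ⊗ₜ y) :=
  ⟨tensorTensorTensorComm_map_mul_left (fun a b ↦ (hΔA a b).1) (fun a b ↦ (hΔB a b).1) x y,
    tensorTensorTensorComm_map_mul_right (fun a b ↦ (hΔA a b).2) (fun a b ↦ (hΔB a b).2) x y⟩

end Coproduct

/-- the coproduct `τ ∘ (Δ_A ⊗ Δ_B)` on the tensor product algebra
`A ⊗[k] B`, where `τ` is the middle-interchange isomorphism, is nearly
Frobenius. -/
theorem isNearlyFrobenius_tensor (k A B : Type*) [Field k]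
    [Ring A] [Algebra k A] [Ring B] [Algebra k B]
    (ΔA : A →ₗ[k] A ⊗[k] A) (hΔA : IsNearlyFrobenius k A ΔA)
    (ΔB : B →ₗ[k] B ⊗[k] B) (hΔB : IsNearlyFrobenius k B ΔB) :
    IsNearlyFrobenius k (A ⊗[k] B)
      ((TensorProduct.tensorTensorTensorComm k A A B B).toLinearMap ∘ₗ
        TensorProduct.map ΔA ΔB) :=
  isNearlyFrobenius_tensor_general hΔA hΔB
end

section
/- Let A and B be associative unital k-algebras. The map sending a pair (Δ_A, Δ_B) ∈ E_A × E_B to the coproduct Δ := (ι_A ⊗ ι_A) ∘ Δ_A ∘ π_A + (ι_B ⊗ ι_B) ∘ Δ_B ∘ π_B on the product algebra A × B is a k-linear bijection E_A × E_B → E_{A×B}. In particular Frobdim(A × B) = Frobdim(A) + Frobdim(B). -/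
open TensorProduct

/-- The Frobenius space of an algebra. -/
def FrobeniusSpace (k A : Type*) [Field k] [Ring A] [Algebra k A] :
    Submodule k (A →ₗ[k] A ⊗[k] A) where
  carrier := {Δ | IsNearlyFrobenius k A Δ}
  add_mem' := by
    intro Δ₁ Δ₂ h₁ h₂ a b
    refine ⟨?_, ?_⟩
    · simp only [LinearMap.add_apply, (h₁ a b).1, (h₂ a b).1, mul_add]
    · simp only [LinearMap.add_apply, (h₁ a b).2, (h₂ a b).2, add_mul]
  zero_mem' := by
    intro a b
    simp
  smul_mem' := by
    intro c Δ h a b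
    refine ⟨?_, ?_⟩
    · simp only [LinearMap.smul_apply, (h a b).1, Algebra.mul_smul_comm]
    · simp only [LinearMap.smul_apply, (h a b).2, Algebra.smul_mul_assoc]

universe u v

/-!
A coproduct on `A` is transported to `A × B` along the inclusion `A → A × B` and the projection
`A × B → A`, and back along the same two maps with their roles exchanged. Starting from `A`, the
round trip is the identity, and it vanishes when the second half goes to the other factor. Starting
from `A × B`, cutting `Δ` down to the factor `A` means multiplying `Δ x` on the left and on the
right by the central idempotent `e = (1, 0)`; since `Δ` is a bimodule map, this gives `Δ (e * x)`.
The idempotents `(1, 0)` and `(0, 1)` sum to `1`, so the two cut-down coproducts sum to `Δ`.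
-/

section TensorProductMap

variable {R A B C D : Type*} [CommSemiring R] [Semiring A] [Algebra R A] [Semiring B] [Algebra R B]
  [Semiring C] [Algebra R C] [Semiring D] [Algebra R D]

theorem tensorProductMap_tmul_one_mul {f : A →ₗ[R] C} {a : A} {c : C}
    (hf : ∀ x, f (a * x) = c * f x) (g : B →ₗ[R] D) (t : A ⊗[R] B) :
    TensorProduct.map f g (a ⊗ₜ[R] (1 : B) * t) =
      c ⊗ₜ[R] (1 : D) * TensorProduct.map f g t := by
  induction t with
  | zero => simp
  | tmul x y => simp [hf]
  | add s t hs ht => simp only [mul_add, map_add, hs, ht]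

theorem tensorProductMap_mul_one_tmul (f : A →ₗ[R] C) {g : B →ₗ[R] D} {b : B} {d : D}
    (hg : ∀ y, g (y * b) = g y * d) (t : A ⊗[R] B) :
    TensorProduct.map f g (t * (1 : A) ⊗ₜ[R] b) =
      TensorProduct.map f g t * (1 : C) ⊗ₜ[R] d := by
  induction t with
  | zero => simp
  | tmul x y => simp [hg]
  | add s t hs ht => simp only [add_mul, map_add, hs, ht]

theorem tensorProductMap_mulLeft_mulRight (a : A) (b : B) (t : A ⊗[R] B) :
    TensorProduct.map (LinearMap.mulLeft R a) (LinearMap.mulRight R b) t =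
      a ⊗ₜ[R] (1 : B) * t * (1 : A) ⊗ₜ[R] b := by
  induction t with
  | zero => simp
  | tmul x y => simp
  | add s t hs ht => simp only [mul_add, add_mul, map_add, hs, ht]

end TensorProductMap

section DirectFactor

variable {R A B : Type*} [CommSemiring R] [Semiring A] [Algebra R A] [Semiring B] [Algebra R B]

/-- The inclusion `i : A → B` and the projection `p : B → A` exhibit `A` as a direct factor of the
algebra `B`: `i` is a map of `B`-bimodules, for the action of `B` on `A` through `p`, with
retraction `p`. Multiplicativity of `i` and `p` is a consequence. -/
structure IsDirectFactor (i : A →ₗ[R] B) (p : B →ₗ[R] A) : Prop where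
  proj_incl (a : A) : p (i a) = a
  incl_proj_mul (b : B) (a : A) : i (p b * a) = b * i a
  incl_mul_proj (a : A) (b : B) : i (a * p b) = i a * b

namespace IsDirectFactor

variable {i : A →ₗ[R] B} {p : B →ₗ[R] A}

theorem incl_proj_eq_mul (h : IsDirectFactor i p) (b : B) : i (p b) = b * i 1 := by
  rw [← h.incl_proj_mul, mul_one]

theorem incl_proj_eq_mul' (h : IsDirectFactor i p) (b : B) : i (p b) = i 1 * b := by
  rw [← h.incl_mul_proj, one_mul]

theorem proj_mul_incl (h : IsDirectFactor i p) (b : B) (a : A) : p (b * i a) = p b * a := by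
  rw [← h.incl_proj_mul, h.proj_incl]

theorem proj_incl_mul (h : IsDirectFactor i p) (a : A) (b : B) : p (i a * b) = a * p b := by
  rw [← h.incl_mul_proj, h.proj_incl]

theorem incl_mul (h : IsDirectFactor i p) (a b : A) : i (a * b) = i a * i b := by
  rw [← h.incl_mul_proj, h.proj_incl]

theorem proj_mul (h : IsDirectFactor i p) (b c : B) : p (b * c) = p b * p c :=
  calc p (b * c) = p (i (p (b * c))) := (h.proj_incl _).symm
    _ = p (b * i (p c)) := by simp only [h.incl_proj_eq_mul, mul_assoc]
    _ = p b * p c := h.proj_mul_incl b (p c)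

variable (R A B)

theorem inl_fst : IsDirectFactor (LinearMap.inl R A B) (LinearMap.fst R A B) where
  proj_incl _ := rfl
  incl_proj_mul _ _ := by simp [Prod.ext_iff]
  incl_mul_proj _ _ := by simp [Prod.ext_iff]

theorem inr_snd : IsDirectFactor (LinearMap.inr R A B) (LinearMap.snd R A B) where
  proj_incl _ := rfl
  incl_proj_mul _ _ := by simp [Prod.ext_iff]
  incl_mul_proj _ _ := by simp [Prod.ext_iff]

end IsDirectFactor

end DirectFactor

section NearlyFrobenius

variable {k A B C : Type*} [Field k] [Ring A] [Algebra k A] [Ring B] [Algebra k B]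
  [Ring C] [Algebra k C]

theorem IsNearlyFrobenius.map_mul_mul {Δ : A →ₗ[k] A ⊗[k] A} (hΔ : IsNearlyFrobenius k A Δ)
    (a x b : A) : Δ (a * x * b) = a ⊗ₜ[k] (1 : A) * Δ x * (1 : A) ⊗ₜ[k] b := by
  rw [(hΔ _ _).2, (hΔ _ _).1]

theorem IsNearlyFrobenius.map_comp_comp_s5 {Δ : A →ₗ[k] A ⊗[k] A} (hΔ : IsNearlyFrobenius k A Δ)
    {f : A →ₗ[k] B} {g : B →ₗ[k] A} (hg : ∀ x y, g (x * y) = g x * g y)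
    (hl : ∀ b a, f (g b * a) = b * f a) (hr : ∀ a b, f (a * g b) = f a * b) :
    IsNearlyFrobenius k B (TensorProduct.map f f ∘ₗ Δ ∘ₗ g) := by
  intro x y
  simp only [LinearMap.comp_apply, hg]
  exact ⟨by rw [(hΔ _ _).1, tensorProductMap_tmul_one_mul (hl x)],
    by rw [(hΔ _ _).2, tensorProductMap_mul_one_tmul f fun a ↦ hr a y]⟩

/-- The linear map `Δ ↦ (f ⊗ f) ∘ Δ ∘ g` between Frobenius spaces. The conditions on `f` and `g`
say that `g` is multiplicative and that `f` is a map of `B`-bimodules when `B` acts on `A`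
through `g`; both a projection and an inclusion can play the role of `g`. -/
def FrobeniusSpace.transport (f : A →ₗ[k] B) (g : B →ₗ[k] A) (hg : ∀ x y, g (x * y) = g x * g y)
    (hl : ∀ b a, f (g b * a) = b * f a) (hr : ∀ a b, f (a * g b) = f a * b) :
    FrobeniusSpace k A →ₗ[k] FrobeniusSpace k B where
  toFun Δ := ⟨TensorProduct.map f f ∘ₗ Δ.1 ∘ₗ g, IsNearlyFrobenius.map_comp_comp_s5 Δ.2 hg hl hr⟩
  map_add' Δ₁ Δ₂ := by
    ext x : 2
    simp
  map_smul' c Δ := by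
    ext x : 2
    simp

namespace IsDirectFactor

variable {i : A →ₗ[k] B} {p : B →ₗ[k] A} {j : C →ₗ[k] B} {q : B →ₗ[k] C}

/-- Extension by zero of a coproduct on a direct factor: `Δ ↦ (i ⊗ i) ∘ Δ ∘ p`. -/
def extend (h : IsDirectFactor i p) : FrobeniusSpace k A →ₗ[k] FrobeniusSpace k B :=
  FrobeniusSpace.transport i p h.proj_mul h.incl_proj_mul h.incl_mul_proj

/-- Restriction of a coproduct to a direct factor: `Δ ↦ (p ⊗ p) ∘ Δ ∘ i`. -/
def restrict (h : IsDirectFactor i p) : FrobeniusSpace k B →ₗ[k] FrobeniusSpace k A :=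
  FrobeniusSpace.transport p i h.incl_mul h.proj_incl_mul h.proj_mul_incl

theorem coe_extend (h : IsDirectFactor i p) (Δ : FrobeniusSpace k A) :
    (h.extend Δ : B →ₗ[k] B ⊗[k] B) = TensorProduct.map i i ∘ₗ Δ.1 ∘ₗ p :=
  rfl

theorem coe_restrict (h : IsDirectFactor i p) (Δ : FrobeniusSpace k B) :
    (h.restrict Δ : A →ₗ[k] A ⊗[k] A) = TensorProduct.map p p ∘ₗ Δ.1 ∘ₗ i :=
  rfl

theorem restrict_comp_extend (h : IsDirectFactor i p) : h.restrict ∘ₗ h.extend = LinearMap.id := by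
  have hpi : p ∘ₗ i = LinearMap.id := LinearMap.ext h.proj_incl
  ext Δ x : 3
  simp [coe_restrict, coe_extend, TensorProduct.map_map, hpi, h.proj_incl]

theorem restrict_comp_extend_eq_zero (hi : IsDirectFactor i p) (hj : IsDirectFactor j q)
    (hqi : q ∘ₗ i = 0) : hi.restrict ∘ₗ hj.extend = 0 := by
  ext Δ x : 3
  have hx : q (i x) = 0 := LinearMap.congr_fun hqi x
  simp [coe_restrict, coe_extend, hx]

theorem extend_restrict_apply (h : IsDirectFactor i p) (Δ : FrobeniusSpace k B) (x : B) :
    (h.extend (h.restrict Δ)).1 x = Δ.1 (i (p x)) := by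
  have hleft : i ∘ₗ p = LinearMap.mulLeft k (i 1) := LinearMap.ext h.incl_proj_eq_mul'
  have hright : i ∘ₗ p = LinearMap.mulRight k (i 1) := LinearMap.ext h.incl_proj_eq_mul
  calc (h.extend (h.restrict Δ)).1 x
      = TensorProduct.map (i ∘ₗ p) (i ∘ₗ p) (Δ.1 (i (p x))) := by
        simp only [coe_extend, coe_restrict, LinearMap.comp_apply, TensorProduct.map_map]
    _ = TensorProduct.map (LinearMap.mulLeft k (i 1)) (LinearMap.mulRight k (i 1))
          (Δ.1 (i (p x))) := by rw [← hleft, ← hright]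
    _ = Δ.1 (i 1 * i (p x) * i 1) := by
        rw [tensorProductMap_mulLeft_mulRight, IsNearlyFrobenius.map_mul_mul Δ.2]
    _ = Δ.1 (i (p x)) := by rw [← h.incl_mul, ← h.incl_mul, one_mul, mul_one]

theorem extend_restrict_add (hi : IsDirectFactor i p) (hj : IsDirectFactor j q)
    (hsum : ∀ x, i (p x) + j (q x) = x) (Δ : FrobeniusSpace k B) :
    hi.extend (hi.restrict Δ) + hj.extend (hj.restrict Δ) = Δ := by
  refine Subtype.ext (LinearMap.ext fun x ↦ ?_)
  calc (hi.extend (hi.restrict Δ)).1 x + (hj.extend (hj.restrict Δ)).1 x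
      = Δ.1 (i (p x) + j (q x)) := by
        rw [hi.extend_restrict_apply, hj.extend_restrict_apply, map_add]
    _ = Δ.1 x := by rw [hsum]

end IsDirectFactor

namespace FrobeniusSpace

variable (k A B)

/-- The isomorphism `E_A × E_B ≃ E_{A × B}` that adds the extensions by zero of two coproducts;
its inverse restricts a coproduct to both factors. -/
def prodEquiv : (FrobeniusSpace k A × FrobeniusSpace k B) ≃ₗ[k] FrobeniusSpace k (A × B) :=
  let hA := IsDirectFactor.inl_fst k A B
  let hB := IsDirectFactor.inr_snd k A B
  LinearEquiv.ofLinearMap (hA.extend.coprod hB.extend) (hA.restrict.prod hB.restrict)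
    (LinearMap.ext fun Δ ↦ hA.extend_restrict_add hB (by simp) Δ)
    (by
      rw [LinearMap.prod_comp, LinearMap.comp_coprod, LinearMap.comp_coprod,
        hA.restrict_comp_extend, hB.restrict_comp_extend,
        hA.restrict_comp_extend_eq_zero hB (LinearMap.snd_comp_inl k A B),
        hB.restrict_comp_extend_eq_zero hA (LinearMap.fst_comp_inr k A B)]
      ext <;> simp)

-- Instance search fails to unify the `AddCommMonoid` of this submodule with one coming from an
-- `AddCommGroup`, so `Module.Free.of_divisionRing` is elaborated without an expected type.
instance : Module.Free k (FrobeniusSpace k A) :=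
  (Module.Free.of_divisionRing k (FrobeniusSpace k A) :)

end FrobeniusSpace

end NearlyFrobenius

/-- `(Δ_A, Δ_B) ↦ (ι_A ⊗ ι_A) ∘ Δ_A ∘ π_A + (ι_B ⊗ ι_B) ∘ Δ_B ∘ π_B`
is a `k`-linear bijection `E_A × E_B ≃ E_{A×B}`; in particular
`Frobdim (A × B) = Frobdim A + Frobdim B`. -/
theorem frobeniusSpace_prod (k : Type u) (A B : Type v) [Field k]
    [Ring A] [Algebra k A] [Ring B] [Algebra k B] :
    ∃ e : (FrobeniusSpace k A × FrobeniusSpace k B) ≃ₗ[k] FrobeniusSpace k (A × B),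
      (∀ (ΔA : FrobeniusSpace k A) (ΔB : FrobeniusSpace k B),
        (e (ΔA, ΔB) : A × B →ₗ[k] (A × B) ⊗[k] (A × B)) =
          TensorProduct.map (LinearMap.inl k A B) (LinearMap.inl k A B) ∘ₗ
            (ΔA : A →ₗ[k] A ⊗[k] A) ∘ₗ LinearMap.fst k A B +
          TensorProduct.map (LinearMap.inr k A B) (LinearMap.inr k A B) ∘ₗ
            (ΔB : B →ₗ[k] B ⊗[k] B) ∘ₗ LinearMap.snd k A B) ∧
      Module.rank k (FrobeniusSpace k (A × B)) =
        Module.rank k (FrobeniusSpace k A) + Module.rank k (FrobeniusSpace k B) := by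
  refine ⟨FrobeniusSpace.prodEquiv k A B, fun _ _ ↦ rfl, ?_⟩
  rw [← (FrobeniusSpace.prodEquiv k A B).rank_eq, rank_prod']
end

section
/- Let G be a finite cyclic group of order n and k a field. Then the Frobenius dimension of the group algebra k[G] equals n, i.e. Frobdim(k[G]) = |G|. -/
open TensorProduct

/-!
A linear form `ε` on a finite-dimensional algebra `A` with nondegenerate pairing `ε (x * y)`
identifies `A ⊗ A` with `End A`, by letting `x ⊗ y` act as `z ↦ ε (y * z) • x`. Under this
identification a nearly Frobenius coproduct sends `x` to `z ↦ x * z * c` for one fixed `c : A`, and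
every `c` occurs, so the Frobenius space is isomorphic to `A`. On a group algebra one takes for `ε`
the coefficient of the identity.
-/

section FrobeniusForm

variable {k A : Type*} [Field k] [Ring A] [Algebra k A]

/-- The bilinear form `(x, y) ↦ ε (x * y)` of a linear form `ε` on an algebra. A finite-dimensional
algebra is a Frobenius algebra when this form is nondegenerate for some `ε`. -/
def frobeniusForm (ε : Module.Dual k A) : LinearMap.BilinForm k A :=
  (LinearMap.mul k A).compr₂ ε

@[simp]
lemma frobeniusForm_apply (ε : Module.Dual k A) (x y : A) : frobeniusForm ε x y = ε (x * y) :=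
  rfl

variable [FiniteDimensional k A] {ε : Module.Dual k A}

/-- The identification of `A ⊗ A` with the endomorphisms of `A` obtained by contracting the right
tensor factor with a nondegenerate form `ε (x * y)`. -/
noncomputable def tensorEquivEnd (hε : (frobeniusForm ε).Nondegenerate) :
    A ⊗[k] A ≃ₗ[k] Module.End k A :=
  TensorProduct.comm k A A ≪≫ₗ
    TensorProduct.congr ((frobeniusForm ε).toDual hε) (LinearEquiv.refl k A) ≪≫ₗ
    dualTensorHomEquiv k A A

variable (hε : (frobeniusForm ε).Nondegenerate)

@[simp]
lemma tensorEquivEnd_tmul_apply (x y z : A) :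
    tensorEquivEnd hε (x ⊗ₜ y) z = ε (y * z) • x :=
  rfl

lemma tensorEquivEnd_tmul_one_mul_apply (a : A) (u : A ⊗[k] A) (z : A) :
    tensorEquivEnd hε ((a ⊗ₜ 1) * u) z = a * tensorEquivEnd hε u z := by
  induction u with
  | zero => simp
  | add u v hu hv => simp only [mul_add, map_add, LinearMap.add_apply, hu, hv]
  | tmul x y => simp

lemma tensorEquivEnd_mul_one_tmul_apply (u : A ⊗[k] A) (b z : A) :
    tensorEquivEnd hε (u * (1 ⊗ₜ b)) z = tensorEquivEnd hε u (b * z) := by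
  induction u with
  | zero => simp
  | add u v hu hv => simp only [add_mul, map_add, LinearMap.add_apply, hu, hv]
  | tmul x y => simp [mul_assoc]

lemma IsNearlyFrobenius.tensorEquivEnd_apply {Δ : A →ₗ[k] A ⊗[k] A}
    (hΔ : IsNearlyFrobenius k A Δ) (x z : A) :
    tensorEquivEnd hε (Δ x) z = x * z * tensorEquivEnd hε (Δ 1) 1 := by
  have left_linear (a w : A) : tensorEquivEnd hε (Δ a) w = a * tensorEquivEnd hε (Δ 1) w := by
    rw [← tensorEquivEnd_tmul_one_mul_apply, ← (hΔ a 1).1, mul_one]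
  have right_linear : tensorEquivEnd hε (Δ 1) z = tensorEquivEnd hε (Δ z) 1 := by
    rw [← one_mul z, (hΔ 1 z).2, tensorEquivEnd_mul_one_tmul_apply, mul_one, one_mul]
  rw [left_linear, right_linear, left_linear, mul_assoc]

/-- The nearly Frobenius coproduct with parameter `c : A`, which corresponds under `tensorEquivEnd`
to `x ↦ (z ↦ x * z * c)`. -/
noncomputable def frobeniusCoproduct (c : A) : A →ₗ[k] A ⊗[k] A :=
  (tensorEquivEnd hε).symm.toLinearMap ∘ₗ (LinearMap.mul k A).compr₂ (LinearMap.mulRight k c)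

@[simp]
lemma tensorEquivEnd_frobeniusCoproduct_apply (c x z : A) :
    tensorEquivEnd hε (frobeniusCoproduct hε c x) z = x * z * c := by
  simp [frobeniusCoproduct]

lemma isNearlyFrobenius_frobeniusCoproduct (c : A) :
    IsNearlyFrobenius k A (frobeniusCoproduct hε c) := by
  intro a b
  constructor <;> apply (tensorEquivEnd hε).injective <;> ext z
  · rw [tensorEquivEnd_tmul_one_mul_apply]
    simp only [tensorEquivEnd_frobeniusCoproduct_apply, mul_assoc]
  · rw [tensorEquivEnd_mul_one_tmul_apply]
    simp only [tensorEquivEnd_frobeniusCoproduct_apply, mul_assoc]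

/-- The isomorphism between the Frobenius space of a Frobenius algebra and the algebra itself, which
sends a coproduct to its parameter in the sense of `frobeniusCoproduct`. -/
noncomputable def frobeniusSpaceEquiv : FrobeniusSpace k A ≃ₗ[k] A where
  toFun Δ := tensorEquivEnd hε (Δ.1 1) 1
  map_add' Δ₁ Δ₂ := by simp
  map_smul' r Δ := by simp
  invFun c := ⟨frobeniusCoproduct hε c, isNearlyFrobenius_frobeniusCoproduct hε c⟩
  left_inv Δ := by
    ext x : 2
    apply (tensorEquivEnd hε).injective
    ext z
    rw [tensorEquivEnd_frobeniusCoproduct_apply, Δ.2.tensorEquivEnd_apply]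
  right_inv c := by simp

end FrobeniusForm

theorem finrank_frobeniusSpace_of_nondegenerate {k A : Type*} [Field k] [Ring A] [Algebra k A]
    [FiniteDimensional k A] {ε : Module.Dual k A} (hε : (frobeniusForm ε).Nondegenerate) :
    Module.finrank k (FrobeniusSpace k A) = Module.finrank k A :=
  (frobeniusSpaceEquiv hε).finrank_eq

lemma nondegenerate_frobeniusForm_coord_one (k G : Type*) [Field k] [Group G] :
    (frobeniusForm ((MonoidAlgebra.basis G k).coord 1)).Nondegenerate := by
  have coord_one (x : MonoidAlgebra k G) : (MonoidAlgebra.basis G k).coord 1 x = x.coeff 1 := rfl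
  constructor <;> intro x hx <;> ext g <;>
    simpa [coord_one] using hx (MonoidAlgebra.single g⁻¹ 1)

theorem frobdim_monoidAlgebra_cyclic_general (k G : Type*) [Field k] [Group G] [Fintype G] :
    Module.finrank k (FrobeniusSpace k (MonoidAlgebra k G)) = Fintype.card G := by
  have : FiniteDimensional k (MonoidAlgebra k G) := .of_basis (MonoidAlgebra.basis G k)
  rw [finrank_frobeniusSpace_of_nondegenerate (nondegenerate_frobeniusForm_coord_one k G),
    Module.finrank_eq_card_basis (MonoidAlgebra.basis G k)]

/-- the Frobenius dimension of the group algebra of a finite cyclic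
group equals the order of the group. -/
theorem frobdim_monoidAlgebra_cyclic (k G : Type*) [Field k] [Group G] [Fintype G]
    [IsCyclic G] :
    Module.finrank k (FrobeniusSpace k (MonoidAlgebra k G)) = Fintype.card G :=
  frobdim_monoidAlgebra_cyclic_general k G
end

section
/- Let A be an associative unital k-algebra. The evaluation map Δ ↦ Δ(1) is a k-linear bijection from the Frobenius space E_A (the space of nearly Frobenius coproducts on A) onto the space of invariants (A ⊗[k] A)^A = { x ∈ A ⊗[k] A : (a ⊗ 1)·x = x·(1 ⊗ a) for all a ∈ A }. -/
open TensorProduct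

/-- The space of invariants `(A ⊗ A)^A = H⁰(A, A ⊗ A)`. -/
def InvariantSpace (k A : Type*) [Field k] [Ring A] [Algebra k A] :
    Submodule k (A ⊗[k] A) where
  carrier := {x | ∀ a : A, (a ⊗ₜ[k] (1 : A)) * x = x * ((1 : A) ⊗ₜ[k] a)}
  add_mem' := by
    intro x y hx hy a
    simp only [mul_add, add_mul, hx a, hy a]
  zero_mem' := by
    intro a
    simp
  smul_mem' := by
    intro c x hx a
    simp only [Algebra.mul_smul_comm, Algebra.smul_mul_assoc, hx a]

/- A map `Δ` that is linear for the left action satisfies `Δ a = a · Δ 1`, so it is determined by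
`Δ 1`. Linearity for the right action also gives `Δ a = Δ 1 · a`, so `Δ 1` is invariant.
Conversely, for an invariant `x` the map `a ↦ a · x = x · a` is linear on both sides. The bimodule
`A ⊗ A` enters only as `B = A ⊗ A` with `A` acting on the left through `a ↦ a ⊗ 1` and on the right
through `a ↦ 1 ⊗ a`. -/

section TwistedBimodule

variable {R A B : Type*} [CommSemiring R] [Semiring A] [Algebra R A] [Semiring B] [Algebra R B]

/-- The space of `A`-bimodule homomorphisms from `A` to the twisted bimodule `ᵩB_ψ`, that is, to `B`
with the left action `a · x = φ a * x` and the right action `x · a = x * ψ a`. -/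
def twistedBimoduleHom (φ ψ : A →ₐ[R] B) : Submodule R (A →ₗ[R] B) where
  carrier := {Δ | ∀ a b : A, Δ (a * b) = φ a * Δ b ∧ Δ (a * b) = Δ a * ψ b}
  add_mem' hΔ₁ hΔ₂ a b :=
    ⟨by simp only [LinearMap.add_apply, (hΔ₁ a b).1, (hΔ₂ a b).1, mul_add],
      by simp only [LinearMap.add_apply, (hΔ₁ a b).2, (hΔ₂ a b).2, add_mul]⟩
  zero_mem' a b := by simp
  smul_mem' c Δ hΔ a b :=
    ⟨by rw [LinearMap.smul_apply, LinearMap.smul_apply, (hΔ a b).1, mul_smul_comm],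
      by rw [LinearMap.smul_apply, LinearMap.smul_apply, (hΔ a b).2, smul_mul_assoc]⟩

/-- The space of invariants `H⁰(A, ᵩB_ψ)` of the twisted bimodule `ᵩB_ψ`: the elements that
intertwine `φ` and `ψ`. -/
def intertwiners (φ ψ : A →ₐ[R] B) : Submodule R B where
  carrier := {x | ∀ a : A, φ a * x = x * ψ a}
  add_mem' hx hy a := by rw [mul_add, add_mul, hx a, hy a]
  zero_mem' a := by rw [mul_zero, zero_mul]
  smul_mem' c x hx a := by rw [mul_smul_comm, smul_mul_assoc, hx a]

variable {φ ψ : A →ₐ[R] B} {Δ : A →ₗ[R] B}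

namespace twistedBimoduleHom

theorem apply_eq_mul_apply_one (hΔ : Δ ∈ twistedBimoduleHom φ ψ) (a : A) : Δ a = φ a * Δ 1 := by
  simpa only [mul_one] using (hΔ a 1).1

theorem apply_eq_apply_one_mul (hΔ : Δ ∈ twistedBimoduleHom φ ψ) (a : A) : Δ a = Δ 1 * ψ a := by
  simpa only [one_mul] using (hΔ 1 a).2

theorem apply_one_mem_intertwiners (hΔ : Δ ∈ twistedBimoduleHom φ ψ) :
    Δ 1 ∈ intertwiners φ ψ := fun a =>
  (apply_eq_mul_apply_one hΔ a).symm.trans (apply_eq_apply_one_mul hΔ a)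

end twistedBimoduleHom

theorem intertwiners.mulRight_comp_mem_twistedBimoduleHom {x : B} (hx : x ∈ intertwiners φ ψ) :
    LinearMap.mulRight R x ∘ₗ φ.toLinearMap ∈ twistedBimoduleHom φ ψ := by
  intro a b
  have map_mul_left : φ (a * b) * x = φ a * (φ b * x) := by rw [map_mul, mul_assoc]
  have map_mul_right : φ (a * b) * x = φ a * x * ψ b := by rw [map_mul_left, hx b, mul_assoc]
  exact ⟨map_mul_left, map_mul_right⟩

/-- Evaluation at `1`, as an isomorphism from the bimodule homomorphisms `A → ᵩB_ψ` onto the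
invariants of `ᵩB_ψ`; its inverse sends `x` to `a ↦ φ a * x`. -/
def twistedBimoduleHom.evalOneEquiv (φ ψ : A →ₐ[R] B) :
    twistedBimoduleHom φ ψ ≃ₗ[R] intertwiners φ ψ where
  __ := (LinearMap.applyₗ (1 : A)).restrict fun _ => apply_one_mem_intertwiners
  invFun x := ⟨_, intertwiners.mulRight_comp_mem_twistedBimoduleHom x.property⟩
  left_inv Δ := Subtype.ext <| LinearMap.ext fun a => (apply_eq_mul_apply_one Δ.property a).symm
  right_inv x := Subtype.ext <| show φ 1 * x.val = x.val by rw [map_one, one_mul]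

theorem frobeniusSpace_equiv_invariants_general (φ ψ : A →ₐ[R] B) :
    ∃ e : twistedBimoduleHom φ ψ ≃ₗ[R] intertwiners φ ψ,
      ∀ Δ : twistedBimoduleHom φ ψ, (e Δ).val = Δ.val 1 :=
  ⟨twistedBimoduleHom.evalOneEquiv φ ψ, fun _ => rfl⟩

end TwistedBimodule

/-- evaluation at `1` is a `k`-linear bijection from the Frobenius
space `E_A` onto the space of invariants `(A ⊗ A)^A`. -/
theorem frobeniusSpace_equiv_invariants (k A : Type*) [Field k] [Ring A] [Algebra k A] :
    ∃ e : FrobeniusSpace k A ≃ₗ[k] InvariantSpace k A,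
      ∀ Δ : FrobeniusSpace k A, (e Δ).val = Δ.val 1 :=
  frobeniusSpace_equiv_invariants_general Algebra.TensorProduct.includeLeft
    Algebra.TensorProduct.includeRight
end

section
/- Let (A, Δ_A) and (B, Δ_B) be nearly Frobenius algebras over k whose coproducts Δ_A and Δ_B are normalized. Then the induced nearly Frobenius coproduct Δ := τ ∘ (Δ_A ⊗ Δ_B) on the tensor product algebra A ⊗[k] B, where τ : (A ⊗ A) ⊗ (B ⊗ B) → (A ⊗ B) ⊗ (A ⊗ B) is the middle-interchange isomorphism, is normalized, i.e. m_{A⊗B} ∘ Δ = id_{A⊗B}. -/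
open TensorProduct

theorem tensorCoprod_normalized_general {R A B : Type*} [CommSemiring R]
    [NonUnitalNonAssocSemiring A] [Module R A] [SMulCommClass R A A] [IsScalarTower R A A]
    [NonUnitalNonAssocSemiring B] [Module R B] [SMulCommClass R B B] [IsScalarTower R B B]
    {ΔA : A →ₗ[R] A ⊗[R] A} {ΔB : B →ₗ[R] B ⊗[R] B}
    (hA : LinearMap.mul' R A ∘ₗ ΔA = LinearMap.id)
    (hB : LinearMap.mul' R B ∘ₗ ΔB = LinearMap.id) :
    LinearMap.mul' R (A ⊗[R] B) ∘ₗ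
        ((TensorProduct.tensorTensorTensorComm R A A B B).toLinearMap ∘ₗ
          TensorProduct.map ΔA ΔB) = LinearMap.id := by
  calc LinearMap.mul' R (A ⊗[R] B) ∘ₗ
        ((TensorProduct.tensorTensorTensorComm R A A B B).toLinearMap ∘ₗ TensorProduct.map ΔA ΔB)
    _ = TensorProduct.map (LinearMap.mul' R A) (LinearMap.mul' R B) ∘ₗ
          TensorProduct.map ΔA ΔB := by
      rw [← LinearMap.comp_assoc, TensorProduct.Algebra.mul'_comp_tensorTensorTensorComm]
    _ = TensorProduct.map (LinearMap.mul' R A ∘ₗ ΔA) (LinearMap.mul' R B ∘ₗ ΔB) :=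
      (TensorProduct.map_comp ..).symm
    _ = LinearMap.id := by rw [hA, hB, TensorProduct.map_id]

/-- if `Δ_A` and `Δ_B` are normalized nearly Frobenius coproducts,
then the induced nearly Frobenius coproduct `τ ∘ (Δ_A ⊗ Δ_B)` on the tensor
product algebra `A ⊗[k] B` is normalized. -/
theorem tensorCoprod_normalized (k A B : Type*) [Field k]
    [Ring A] [Algebra k A] [Ring B] [Algebra k B]
    (ΔA : A →ₗ[k] A ⊗[k] A) (hΔA : IsNearlyFrobenius k A ΔA)
    (ΔB : B →ₗ[k] B ⊗[k] B) (hΔB : IsNearlyFrobenius k B ΔB)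
    (hA : LinearMap.mul' k A ∘ₗ ΔA = LinearMap.id)
    (hB : LinearMap.mul' k B ∘ₗ ΔB = LinearMap.id) :
    LinearMap.mul' k (A ⊗[k] B) ∘ₗ
        ((TensorProduct.tensorTensorTensorComm k A A B B).toLinearMap ∘ₗ
          TensorProduct.map ΔA ΔB) = LinearMap.id :=
  tensorCoprod_normalized_general hA hB
end

section
/- Let A be an associative unital k-algebra. Then A admits a normalized nearly Frobenius coproduct if and only if every module over the enveloping algebra Aᵉ = A ⊗[k] Aᵐᵒᵖ is projective, if and only if Aᵉ is a semisimple ring (i.e. the category of A-bimodules is semisimple). -/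
open TensorProduct

universe u v

/-!
A normalized coproduct is determined by `Δ 1 = ∑ xᵢ ⊗ yᵢ`, which is a separability idempotent of
`A`: `∑ s xᵢ ⊗ yᵢ = ∑ xᵢ ⊗ yᵢ s` and `∑ xᵢ yᵢ = 1`. Separability idempotents of `A` induce ones of
`Aᵐᵒᵖ` and hence of `Aᵉ`, and averaging a linear retraction `g` to `m ↦ ∑ xᵢ • g (yᵢ • m)` makes
it equivariant, as in Maschke's theorem; so `Aᵉ` is semisimple. Conversely, if every `Aᵉ`-module is
projective, the multiplication `Aᵉ → A` has an `Aᵉ`-linear section, whose value at `1` is a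
separability idempotent.
-/

/-- A separability idempotent of the `k`-algebra `S`: an element of the bimodule `S ⊗[k] S` on which
the outer left and right actions of `S` agree and which multiplies out to `1`. It witnesses that
`S` is separable over `k`. The actions are written as products in the algebra `S ⊗[k] S`, in which
the element need not be idempotent; it is idempotent in `S ⊗[k] Sᵐᵒᵖ`. -/
structure IsSeparabilityIdempotent (k : Type*) {S : Type*} [CommSemiring k] [Semiring S]
    [Algebra k S] (e : S ⊗[k] S) : Prop where
  tmul_one_mul : ∀ s : S, (s ⊗ₜ[k] (1 : S)) * e = e * ((1 : S) ⊗ₜ[k] s)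
  mul'_eq_one : LinearMap.mul' k S e = 1

section Coproduct

variable {k A : Type*} [CommSemiring k] [Semiring A] [Algebra k A]

theorem exists_normalized_coproduct_iff_exists_isSeparabilityIdempotent :
    (∃ Δ : A →ₗ[k] A ⊗[k] A,
      (∀ a b : A, Δ (a * b) = (a ⊗ₜ[k] (1 : A)) * Δ b ∧ Δ (a * b) = Δ a * ((1 : A) ⊗ₜ[k] b)) ∧
        LinearMap.mul' k A ∘ₗ Δ = LinearMap.id) ↔
      ∃ e : A ⊗[k] A, IsSeparabilityIdempotent k e := by
  constructor
  · rintro ⟨Δ, hΔ, hmul⟩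
    refine ⟨Δ 1, fun s => ?_, LinearMap.congr_fun hmul 1⟩
    rw [← (hΔ s 1).1, ← (hΔ 1 s).2, mul_one, one_mul]
  · rintro ⟨e, he⟩
    let Δ : A →ₗ[k] A ⊗[k] A :=
      LinearMap.mulRight k e ∘ₗ Algebra.TensorProduct.includeLeft.toLinearMap
    have hΔ (a : A) : Δ a = (a ⊗ₜ[k] (1 : A)) * e := rfl
    have left_mul (a b : A) : Δ (a * b) = (a ⊗ₜ[k] (1 : A)) * Δ b := by
      rw [hΔ, hΔ, ← mul_assoc, Algebra.TensorProduct.tmul_mul_tmul, one_mul]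
    have right_mul (a b : A) : Δ (a * b) = Δ a * ((1 : A) ⊗ₜ[k] b) := by
      rw [left_mul, hΔ, hΔ, he.tmul_one_mul b, mul_assoc]
    have mul'_left_mul (a : A) (t : A ⊗[k] A) :
        LinearMap.mul' k A ((a ⊗ₜ[k] (1 : A)) * t) = a * LinearMap.mul' k A t := by
      induction t with
      | zero => simp
      | tmul x y => simp [mul_assoc]
      | add t t' ht ht' => simp only [mul_add, map_add, ht, ht']
    refine ⟨Δ, fun a b => ⟨left_mul a b, right_mul a b⟩, LinearMap.ext fun a => ?_⟩
    change LinearMap.mul' k A ((a ⊗ₜ[k] (1 : A)) * e) = a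
    rw [mul'_left_mul, he.mul'_eq_one, mul_one]

end Coproduct

section Sandwich

variable {k S M N : Type*} [CommSemiring k] [Semiring S] [Algebra k S]
  [AddCommMonoid M] [Module k M] [Module S M] [IsScalarTower k S M]
  [AddCommMonoid N] [Module k N] [Module S N] [IsScalarTower k S N]

/-- The bimodule action of `S ⊗[k] S` on a `k`-linear map `g` between `S`-modules: the tensor
`∑ xᵢ ⊗ yᵢ` is sent to the map `m ↦ ∑ xᵢ • g (yᵢ • m)`. -/
def sandwich (g : M →ₗ[k] N) : S ⊗[k] S →ₗ[k] M →ₗ[k] N :=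
  TensorProduct.lift <| (LinearMap.llcomp k M N N).compl₁₂ (Algebra.lsmul k k N).toLinearMap
    (LinearMap.llcomp k M M N g ∘ₗ (Algebra.lsmul k k M).toLinearMap)

@[simp]
theorem sandwich_tmul (g : M →ₗ[k] N) (x y : S) (m : M) :
    sandwich g (x ⊗ₜ[k] y) m = x • g (y • m) := rfl

theorem sandwich_tmul_one_mul (g : M →ₗ[k] N) (s : S) (t : S ⊗[k] S) (m : M) :
    sandwich g ((s ⊗ₜ[k] (1 : S)) * t) m = s • sandwich g t m := by
  induction t with
  | zero => simp
  | tmul x y => simp [mul_smul]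
  | add t t' ht ht' => simp only [mul_add, map_add, LinearMap.add_apply, ht, ht', smul_add]

theorem sandwich_mul_one_tmul (g : M →ₗ[k] N) (s : S) (t : S ⊗[k] S) (m : M) :
    sandwich g (t * ((1 : S) ⊗ₜ[k] s)) m = sandwich g t (s • m) := by
  induction t with
  | zero => simp
  | tmul x y => simp [mul_smul]
  | add t t' ht ht' => simp only [add_mul, map_add, LinearMap.add_apply, ht, ht']

theorem sandwich_apply_of_leftInverse {g : M →ₗ[k] N} {f : N →ₗ[S] M}
    (hgf : Function.LeftInverse g f) (t : S ⊗[k] S) (n : N) :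
    sandwich g t (f n) = LinearMap.mul' k S t • n := by
  induction t with
  | zero => simp
  | tmul x y => rw [sandwich_tmul, ← map_smul f, hgf, LinearMap.mul'_apply, mul_smul]
  | add t t' ht ht' => simp only [map_add, LinearMap.add_apply, ht, ht', add_smul]

end Sandwich

namespace IsSeparabilityIdempotent

section Average

variable {k S M N : Type*} [CommSemiring k] [Semiring S] [Algebra k S]
  [AddCommMonoid M] [Module k M] [Module S M] [IsScalarTower k S M]
  [AddCommMonoid N] [Module k N] [Module S N] [IsScalarTower k S N] {e : S ⊗[k] S}

/-- The `S`-linear average of a `k`-linear map `g` along a separability idempotent `∑ xᵢ ⊗ yᵢ`,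
namely `m ↦ ∑ xᵢ • g (yᵢ • m)`. It generalizes the averaging operator of Maschke's theorem. -/
def average (he : IsSeparabilityIdempotent k e) (g : M →ₗ[k] N) : M →ₗ[S] N where
  toFun := sandwich g e
  map_add' := map_add _
  map_smul' s m := by
    rw [← sandwich_mul_one_tmul, ← he.tmul_one_mul, sandwich_tmul_one_mul, RingHom.id_apply]

theorem leftInverse_average (he : IsSeparabilityIdempotent k e) {g : M →ₗ[k] N} {f : N →ₗ[S] M}
    (hgf : Function.LeftInverse g f) : Function.LeftInverse (he.average g) f := fun n => by
  change sandwich g e (f n) = n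
  rw [sandwich_apply_of_leftInverse hgf, he.mul'_eq_one, one_smul]

end Average

theorem isSemisimpleModule {k S : Type*} [CommRing k] [IsSemisimpleRing k] [Ring S] [Algebra k S]
    {e : S ⊗[k] S} (he : IsSeparabilityIdempotent k e) (M : Type*) [AddCommGroup M] [Module k M]
    [Module S M] [IsScalarTower k S M] : IsSemisimpleModule S M := by
  refine (isSemisimpleModule_iff S M).2 ⟨fun N => ?_⟩
  obtain ⟨g, hg⟩ := IsSemisimpleModule.extension_property
    (N.subtype.restrictScalars k) N.subtype_injective LinearMap.id
  have hgN : Function.LeftInverse g N.subtype := LinearMap.congr_fun hg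
  exact ⟨LinearMap.ker (he.average g), LinearMap.isCompl_of_proj (he.leftInverse_average hgN)⟩

section Constructions

open Algebra.TensorProduct MulOpposite

variable {k S R : Type*} [CommSemiring k] [Semiring S] [Algebra k S] [Semiring R] [Algebra k R]

theorem mop {e : S ⊗[k] S} (he : IsSeparabilityIdempotent k e) :
    IsSeparabilityIdempotent k
      ((opAlgEquiv k k S S).symm (op (Algebra.TensorProduct.comm k S S e))) where
  tmul_one_mul s := by
    apply (opAlgEquiv k k S S).injective
    apply unop_injective
    apply (Algebra.TensorProduct.comm k S S).symm.injective
    simpa using (he.tmul_one_mul s.unop).symm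
  mul'_eq_one := by
    have mul'_comm_op (t : S ⊗[k] S) :
        LinearMap.mul' k Sᵐᵒᵖ
            ((opAlgEquiv k k S S).symm (op (Algebra.TensorProduct.comm k S S t))) =
          op (LinearMap.mul' k S t) := by
      induction t with
      | zero => simp
      | tmul x y => simp
      | add t t' ht ht' => simp only [map_add, op_add, ht, ht']
    rw [mul'_comm_op, he.mul'_eq_one, op_one]

theorem tensorProduct {e : S ⊗[k] S} {f : R ⊗[k] R} (he : IsSeparabilityIdempotent k e)
    (hf : IsSeparabilityIdempotent k f) :
    IsSeparabilityIdempotent k (tensorTensorTensorComm k k k k S S R R (e ⊗ₜ[k] f)) where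
  tmul_one_mul s := by
    induction s with
    | zero => simp
    | tmul a b =>
      have left_eq : (a ⊗ₜ[k] b) ⊗ₜ[k] (1 : S ⊗[k] R) =
          tensorTensorTensorComm k k k k S S R R ((a ⊗ₜ[k] 1) ⊗ₜ[k] (b ⊗ₜ[k] 1)) := rfl
      have right_eq : (1 : S ⊗[k] R) ⊗ₜ[k] (a ⊗ₜ[k] b) =
          tensorTensorTensorComm k k k k S S R R ((1 ⊗ₜ[k] a) ⊗ₜ[k] (1 ⊗ₜ[k] b)) := rfl
      rw [left_eq, right_eq, ← map_mul, ← map_mul, tmul_mul_tmul, tmul_mul_tmul,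
        he.tmul_one_mul, hf.tmul_one_mul]
    | add s s' hs hs' => rw [add_tmul, tmul_add, add_mul, mul_add, hs, hs']
  mul'_eq_one := by
    have mul'_comm : LinearMap.mul' k (S ⊗[k] R)
          (tensorTensorTensorComm k k k k S S R R (e ⊗ₜ[k] f)) =
        LinearMap.mul' k S e ⊗ₜ[k] LinearMap.mul' k R f :=
      LinearMap.congr_fun TensorProduct.Algebra.mul'_comp_tensorTensorTensorComm (e ⊗ₜ[k] f)
    rw [mul'_comm, he.mul'_eq_one, hf.mul'_eq_one, one_def]

end Constructions

end IsSeparabilityIdempotent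

theorem isSemisimpleRing_enveloping_of_isSeparabilityIdempotent {k A : Type*} [CommRing k]
    [IsSemisimpleRing k] [Ring A] [Algebra k A] {e : A ⊗[k] A}
    (he : IsSeparabilityIdempotent k e) : IsSemisimpleRing (A ⊗[k] Aᵐᵒᵖ) :=
  (he.tensorProduct he.mop).isSemisimpleModule (A ⊗[k] Aᵐᵒᵖ)

section Projective

open MulOpposite

attribute [local instance] instModuleTensorProductMop

variable {k A : Type*} [CommSemiring k] [Semiring A] [Algebra k A]

theorem enveloping_tmul_smul (a : A) (b : Aᵐᵒᵖ) (c : A) :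
    (a ⊗ₜ[k] b) • c = a * c * b.unop := by
  rw [TensorProduct.Algebra.smul_def, MulOpposite.smul_eq_mul_unop, smul_eq_mul, mul_assoc]

/-- The identification `a ⊗ op b ↦ a ⊗ b` of the enveloping algebra with `A ⊗[k] A`. It is only
linear: left multiplication by `1 ⊗ op s` becomes right multiplication by `1 ⊗ s`. -/
def unopRight (k A : Type*) [CommSemiring k] [Semiring A] [Algebra k A] :
    A ⊗[k] Aᵐᵒᵖ →ₗ[k] A ⊗[k] A :=
  (opLinearEquiv k).symm.toLinearMap.lTensor A

@[simp]
theorem unopRight_tmul (a : A) (b : Aᵐᵒᵖ) : unopRight k A (a ⊗ₜ[k] b) = a ⊗ₜ[k] b.unop := rfl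

theorem unopRight_tmul_one_mul (s : A) (t : A ⊗[k] Aᵐᵒᵖ) :
    unopRight k A ((s ⊗ₜ[k] 1) * t) = (s ⊗ₜ[k] (1 : A)) * unopRight k A t := by
  induction t with
  | zero => simp
  | tmul x y => simp
  | add t t' ht ht' => simp only [mul_add, map_add, ht, ht']

theorem unopRight_one_tmul_op_mul (s : A) (t : A ⊗[k] Aᵐᵒᵖ) :
    unopRight k A ((1 ⊗ₜ[k] op s) * t) = unopRight k A t * ((1 : A) ⊗ₜ[k] s) := by
  induction t with
  | zero => simp
  | tmul x y => simp
  | add t t' ht ht' => simp only [mul_add, add_mul, map_add, ht, ht']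

theorem mul'_unopRight (t : A ⊗[k] Aᵐᵒᵖ) :
    LinearMap.mul' k A (unopRight k A t) = t • (1 : A) := by
  induction t with
  | zero =>
    rw [map_zero, map_zero]
    exact (zero_smul (A ⊗[k] Aᵐᵒᵖ) (1 : A)).symm
  | tmul x y => simp [enveloping_tmul_smul]
  | add t t' ht ht' => simp only [map_add, ht, ht', add_smul]

theorem exists_isSeparabilityIdempotent_of_projective [Module.Projective (A ⊗[k] Aᵐᵒᵖ) A] :
    ∃ e : A ⊗[k] A, IsSeparabilityIdempotent k e := by
  let mulMap : A ⊗[k] Aᵐᵒᵖ →ₗ[A ⊗[k] Aᵐᵒᵖ] A := LinearMap.toSpanSingleton _ A 1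
  have mulMap_surjective : Function.Surjective mulMap := fun a =>
    ⟨a ⊗ₜ[k] 1, by simp [mulMap, enveloping_tmul_smul]⟩
  obtain ⟨σ, hσ⟩ := Module.projective_lifting_property mulMap LinearMap.id mulMap_surjective
  refine ⟨unopRight k A (σ 1), fun s => ?_, ?_⟩
  · have smul_one_eq : (s ⊗ₜ[k] (1 : Aᵐᵒᵖ)) • (1 : A) = ((1 : A) ⊗ₜ[k] op s) • (1 : A) := by
      simp [enveloping_tmul_smul]
    rw [← unopRight_tmul_one_mul, ← unopRight_one_tmul_op_mul, ← smul_eq_mul, ← smul_eq_mul,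
      ← map_smul, ← map_smul, smul_one_eq]
  · rw [mul'_unopRight]
    exact LinearMap.congr_fun hσ 1

end Projective

theorem normalized_iff_bimodules_semisimple_general (k : Type u) (A : Type v) [CommRing k]
    [IsSemisimpleRing k] [Ring A] [Algebra k A] :
    List.TFAE [
      ∃ Δ : A →ₗ[k] A ⊗[k] A,
        (∀ a b : A, Δ (a * b) = (a ⊗ₜ[k] (1 : A)) * Δ b ∧ Δ (a * b) = Δ a * ((1 : A) ⊗ₜ[k] b)) ∧
          LinearMap.mul' k A ∘ₗ Δ = LinearMap.id,
      ∀ (M : Type v) [AddCommGroup M] [Module (A ⊗[k] Aᵐᵒᵖ) M],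
        Module.Projective (A ⊗[k] Aᵐᵒᵖ) M,
      IsSemisimpleRing (A ⊗[k] Aᵐᵒᵖ)] := by
  rw [exists_normalized_coproduct_iff_exists_isSeparabilityIdempotent]
  tfae_have 1 → 3 := fun ⟨_, he⟩ => isSemisimpleRing_enveloping_of_isSeparabilityIdempotent he
  tfae_have 3 → 2 := fun _ M _ _ => Module.projective_of_isSemisimpleRing _ M
  tfae_have 2 → 1 := fun hproj =>
    letI := instModuleTensorProductMop k A
    have := hproj A
    exists_isSeparabilityIdempotent_of_projective
  tfae_finish

/-- an algebra `A` admits a normalized nearly Frobenius coproduct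
iff every module over the enveloping algebra `Aᵉ = A ⊗[k] Aᵐᵒᵖ` is projective,
iff `Aᵉ` is a semisimple ring (i.e. the category of `A`-bimodules is
semisimple). -/
theorem normalized_iff_bimodules_semisimple (k : Type u) (A : Type v) [Field k]
    [Ring A] [Algebra k A] :
    ((∃ Δ : A →ₗ[k] A ⊗[k] A, IsNearlyFrobenius k A Δ ∧
        LinearMap.mul' k A ∘ₗ Δ = LinearMap.id) ↔
      (∀ (M : Type v) [AddCommGroup M] [Module (A ⊗[k] Aᵐᵒᵖ) M],
        Module.Projective (A ⊗[k] Aᵐᵒᵖ) M)) ∧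
    ((∀ (M : Type v) [AddCommGroup M] [Module (A ⊗[k] Aᵐᵒᵖ) M],
        Module.Projective (A ⊗[k] Aᵐᵒᵖ) M) ↔
      IsSemisimpleRing (A ⊗[k] Aᵐᵒᵖ)) :=
  have h := normalized_iff_bimodules_semisimple_general k A
  ⟨h.out 0 1, h.out 1 2⟩
end

section
/- Let k be a perfect field and A a finite-dimensional associative unital k-algebra. Then A is a semisimple ring if and only if A admits a normalized nearly Frobenius coproduct (equivalently, if and only if A is separable over k; equivalently, if and only if the enveloping algebra A ⊗[k] Aᵐᵒᵖ is a semisimple ring). -/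
open TensorProduct

/-!
Let `A` and `B` be semisimple `k`-algebras. An element of minimal support in a nonzero two-sided
ideal of `A ⊗[k] B`, expanded in a `k`-basis of `B` and normalized by a central idempotent of `A`,
commutes with `A`. Doing this on both sides, every nonzero two-sided ideal meets
`Z(A) ⊗[k] Z(B)`. Over a perfect field that commutative algebra is reduced, so the nilpotent
Jacobson radical of `A ⊗[k] B` vanishes. Apply this to `B = Aᵐᵒᵖ`: the multiplication
`A ⊗[k] Aᵐᵒᵖ → A` then splits as a map of bimodules, and the image of `1` under a section is a
separability idempotent. Such an element exhibits every `A`-module `M` as a direct summand of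
`A ⊗[k] M`, hence as projective. Coproducts `Δ` correspond to separability idempotents through
`Δ 1`.
-/

section Semisimple

variable {R : Type*} [Ring R]

theorem exists_mul_mul_eq_self_of_isSemisimpleRing [IsSemisimpleRing R] (u : R) :
    ∃ a, u * a * u = u := by
  obtain ⟨g, hg, hspan⟩ := IsSemisimpleRing.ideal_eq_span_idempotent (Ideal.span {u})
  obtain ⟨a, rfl⟩ := Ideal.mem_span_singleton'.1 (hspan ▸ Ideal.mem_span_singleton_self g)
  obtain ⟨b, hb⟩ := Ideal.mem_span_singleton'.1 (hspan ▸ Ideal.mem_span_singleton_self u)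
  refine ⟨a, ?_⟩
  calc u * a * u = b * (a * u) * (a * u) := by rw [hb, mul_assoc]
    _ = u := by rw [mul_assoc, hg.eq, hb]

theorem eq_zero_of_forall_mul_mul_eq_zero [IsSemisimpleRing R] {u : R}
    (h : ∀ a, u * a * u = 0) : u = 0 := by
  obtain ⟨a, ha⟩ := exists_mul_mul_eq_self_of_isSemisimpleRing u
  rw [← ha, h]

theorem exists_isIdempotentElem_mem_center_eq_span [IsSemisimpleRing R] (I : Ideal R)
    [I.IsTwoSided] : ∃ e, IsIdempotentElem e ∧ e ∈ Subring.center R ∧ I = Ideal.span {e} := by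
  obtain ⟨e, he, rfl⟩ := IsSemisimpleRing.ideal_eq_span_idempotent I
  have mul_mul_e (x : R) : e * x * e = e * x := by
    obtain ⟨a, ha⟩ := Ideal.mem_span_singleton'.1
      (Ideal.mul_mem_right x _ (Ideal.mem_span_singleton_self e))
    rw [← ha, mul_assoc, he.eq]
  have corner (x : R) : (1 - e) * x * e = 0 := by
    refine eq_zero_of_forall_mul_mul_eq_zero fun a ↦ ?_
    calc (1 - e) * x * e * a * ((1 - e) * x * e)
        = (1 - e) * x * (e * a * (1 - e)) * x * e := by simp only [mul_assoc]
      _ = 0 := by rw [mul_one_sub, mul_mul_e, sub_self, mul_zero, zero_mul, zero_mul]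
  refine ⟨e, he, Subring.mem_center_iff.2 fun x ↦ ?_, rfl⟩
  rw [← mul_mul_e, ← sub_eq_zero, ← corner x]
  noncomm_ring

theorem isSemisimpleModule_of_forall_projective_quotient {M : Type*} [AddCommGroup M] [Module R M]
    (h : ∀ N : Submodule R M, Module.Projective R (M ⧸ N)) : IsSemisimpleModule R M := by
  refine (isSemisimpleModule_iff R M).2 ⟨fun N ↦ ?_⟩
  have := h N
  obtain ⟨s, hs⟩ := Module.projective_lifting_property N.mkQ LinearMap.id N.mkQ_surjective
  have idem : IsIdempotentElem (s ∘ₗ N.mkQ) :=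
    LinearMap.ext fun x ↦ congrArg s (LinearMap.congr_fun hs (N.mkQ x))
  have ker_eq : LinearMap.ker (s ∘ₗ N.mkQ) = N := by
    rw [LinearMap.ker_comp_of_ker_eq_bot _ (LinearMap.ker_eq_bot_of_inverse hs), N.ker_mkQ]
  exact ⟨_, ker_eq ▸ (LinearMap.IsIdempotentElem.isCompl idem).symm⟩

end Semisimple

section TensorProduct

variable {k A B : Type*}

theorem isReduced_center [CommSemiring k] [Ring A] [Algebra k A] [IsSemisimpleRing A] :
    IsReduced (Subalgebra.center k A) := by
  refine (isReduced_iff_pow_one_lt 2 one_lt_two).2 fun z hz ↦ Subtype.ext ?_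
  refine eq_zero_of_forall_mul_mul_eq_zero fun a ↦ ?_
  have mul_self : (z : A) * z = 0 := by rw [← sq]; exact congrArg Subtype.val hz
  rw [← Subalgebra.mem_center_iff.1 z.2 a, mul_assoc, mul_self, mul_zero]

theorem tmul_one_mul_eq_smul_s19 [CommSemiring k] [Semiring A] [Algebra k A] [Semiring B]
    [Algebra k B] (a : A) (x : A ⊗[k] B) : (a ⊗ₜ[k] (1 : B)) * x = a • x := by
  rw [← one_mul x, ← smul_mul_assoc, one_mul, Algebra.TensorProduct.one_def, smul_tmul',
    smul_eq_mul, mul_one]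

theorem exists_mem_ne_zero_forall_smul_eq_op_smul {ι : Type*} [Ring A] [IsSemisimpleRing A]
    {P : Submodule A (ι →₀ A)} (hP : ∀ a : A, ∀ x ∈ P, MulOpposite.op a • x ∈ P) (hne : P ≠ ⊥) :
    ∃ x ∈ P, x ≠ 0 ∧ ∀ a : A, a • x = MulOpposite.op a • x := by
  classical
  obtain ⟨x, ⟨hxP, hx0⟩, hmin⟩ :=
    (measure fun x : ι →₀ A ↦ x.support.card).wf.has_min {x | x ∈ P ∧ x ≠ 0}
      (P.exists_mem_ne_zero_of_ne_bot hne)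
  obtain ⟨i, hi⟩ := Finsupp.support_nonempty_iff.2 hx0
  let L : Ideal A := (P ⊓ Finsupp.supported A A x.support).map (Finsupp.lapply i)
  have : L.IsTwoSided := ⟨by
    rintro _ b ⟨y, hy, rfl⟩
    have support_subset : ((MulOpposite.op b • y).support : Set ι) ⊆ x.support :=
      (Finset.coe_subset.2 Finsupp.support_smul).trans hy.2
    exact ⟨MulOpposite.op b • y, ⟨hP b y hy.1, (Finsupp.mem_supported ..).2 support_subset⟩, rfl⟩⟩
  have apply_mem : x i ∈ L := ⟨x, ⟨hxP, (Finsupp.mem_supported ..).2 subset_rfl⟩, rfl⟩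
  obtain ⟨z, -, hz, hLz⟩ := exists_isIdempotentElem_mem_center_eq_span L
  obtain ⟨y, ⟨hyP, hyx⟩, rfl⟩ : z ∈ L := hLz ▸ Ideal.mem_span_singleton_self z
  refine ⟨y, hyP, ?_, fun a ↦ ?_⟩
  · rintro rfl
    rw [hLz, map_zero, Ideal.span_singleton_zero, Ideal.mem_bot] at apply_mem
    exact Finsupp.mem_support_iff.1 hi apply_mem
  -- The commutator of `a` and `y` lives on the support of `x` but vanishes at `i`.
  by_contra h
  refine hmin (a • y - MulOpposite.op a • y)
    ⟨P.sub_mem (P.smul_mem a hyP) (hP a y hyP), sub_ne_zero.2 h⟩ ?_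
  refine Finset.card_lt_card ((Finset.ssubset_iff_of_subset ?_).2 ⟨i, hi, ?_⟩)
  · refine Finsupp.support_sub.trans (Finset.union_subset ?_ ?_)
    all_goals exact Finsupp.support_smul.trans hyx
  · simpa [sub_eq_zero] using Subring.mem_center_iff.1 hz a

section CommRing

variable [CommRing k] [Ring A] [Algebra k A] [Ring B] [Algebra k B]

theorem comap_map_center_val_id_ne_bot [IsSemisimpleRing A] [Module.Free k B]
    {I : Ideal (A ⊗[k] B)} [I.IsTwoSided] (hI : I ≠ ⊥) :
    I.comap (Algebra.TensorProduct.map (Subalgebra.center k A).val (AlgHom.id k B)) ≠ ⊥ := by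
  let b := Algebra.TensorProduct.basis A (Module.Free.chooseBasis k B)
  have repr_mul (a : A) (x : A ⊗[k] B) :
      b.repr (x * (a ⊗ₜ 1)) = MulOpposite.op a • b.repr x := by
    induction x with
    | zero => simp only [zero_mul, map_zero, smul_zero]
    | tmul c r => ext i; simp [b, Algebra.commutes, mul_assoc]
    | add x y hx hy => simp only [add_mul, map_add, hx, hy, smul_add]
  let P : Submodule A (_ →₀ A) := (I.restrictScalars A).map b.repr.toLinearMap
  have op_smul_mem : ∀ a : A, ∀ x ∈ P, MulOpposite.op a • x ∈ P := by
    rintro a _ ⟨x, hx, rfl⟩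
    exact ⟨_, I.mul_mem_right (a ⊗ₜ 1) hx, repr_mul a x⟩
  have P_ne_bot : P ≠ ⊥ := by simpa [P] using hI
  obtain ⟨_, ⟨y, hy, rfl⟩, hne, hcomm⟩ :=
    exists_mem_ne_zero_forall_smul_eq_op_smul op_smul_mem P_ne_bot
  have mem_centralizer : y ∈ Subalgebra.centralizer k
      ((Algebra.TensorProduct.includeLeft : A →ₐ[k] A ⊗[k] B).range : Set (A ⊗[k] B)) := by
    rintro _ ⟨a, rfl⟩
    apply b.repr.injective
    calc b.repr ((a ⊗ₜ 1) * y) = a • b.repr y := by rw [tmul_one_mul_eq_smul_s19, map_smul]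
      _ = b.repr (y * (a ⊗ₜ 1)) := (hcomm a).trans (repr_mul a y).symm
  rw [Subalgebra.centralizer_coe_range_includeLeft_eq_center_tensorProduct] at mem_centralizer
  obtain ⟨z, rfl⟩ := mem_centralizer
  refine (Submodule.ne_bot_iff _).2 ⟨z, hy, ?_⟩
  rintro rfl
  simp at hne

theorem comap_map_id_center_val_ne_bot [Module.Free k A] [IsSemisimpleRing B]
    {I : Ideal (A ⊗[k] B)} [I.IsTwoSided] (hI : I ≠ ⊥) :
    I.comap (Algebra.TensorProduct.map (AlgHom.id k A) (Subalgebra.center k B).val) ≠ ⊥ := by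
  obtain ⟨x, hx, hx0⟩ := I.exists_mem_ne_zero_of_ne_bot hI
  have comap_comm_ne_bot : I.comap (Algebra.TensorProduct.comm k B A) ≠ ⊥ :=
    (Submodule.ne_bot_iff _).2 ⟨(Algebra.TensorProduct.comm k B A).symm x,
      by rwa [Ideal.mem_comap, AlgEquiv.apply_symm_apply], by simpa using hx0⟩
  obtain ⟨z, hz, hz0⟩ := Submodule.exists_mem_ne_zero_of_ne_bot
    (comap_map_center_val_id_ne_bot comap_comm_ne_bot)
  refine (Submodule.ne_bot_iff _).2 ⟨Algebra.TensorProduct.comm k _ _ z, ?_, by simpa using hz0⟩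
  rw [Ideal.mem_comap] at hz ⊢
  exact DFunLike.congr_fun (Algebra.TensorProduct.comm_comp_map
    (Subalgebra.center k B).val (AlgHom.id k A)) z ▸ hz

end CommRing

section Field

variable [Field k] [Ring A] [Algebra k A] [Ring B] [Algebra k B]
  [IsSemisimpleRing A] [IsSemisimpleRing B]

theorem comap_map_center_val_center_val_ne_bot {I : Ideal (A ⊗[k] B)} [I.IsTwoSided]
    (hI : I ≠ ⊥) :
    I.comap (Algebra.TensorProduct.map (Subalgebra.center k A).val (Subalgebra.center k B).val) ≠
      ⊥ := by
  have map_eq : Algebra.TensorProduct.map (Subalgebra.center k A).val (Subalgebra.center k B).val =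
      (Algebra.TensorProduct.map (Subalgebra.center k A).val (AlgHom.id k B)).comp
        (Algebra.TensorProduct.map (AlgHom.id k _) (Subalgebra.center k B).val) := by
    rw [← Algebra.TensorProduct.map_comp, AlgHom.comp_id, AlgHom.id_comp]
  rw [map_eq]
  exact comap_map_id_center_val_ne_bot (comap_map_center_val_id_ne_bot hI)

theorem isSemisimpleRing_tensorProduct_of_isReduced_center [IsArtinianRing (A ⊗[k] B)]
    [IsReduced (Subalgebra.center k A ⊗[k] Subalgebra.center k B)] :
    IsSemisimpleRing (A ⊗[k] B) := by
  rw [IsArtinianRing.isSemisimpleRing_iff_jacobson]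
  by_contra jacobson_ne_bot
  obtain ⟨z, hz, hz0⟩ := Submodule.exists_mem_ne_zero_of_ne_bot
    (comap_map_center_val_center_val_ne_bot jacobson_ne_bot)
  obtain ⟨n, hn⟩ := IsSemiprimaryRing.isNilpotent (R := A ⊗[k] B)
  have map_injective : Function.Injective
      (Algebra.TensorProduct.map (Subalgebra.center k A).val (Subalgebra.center k B).val) :=
    TensorProduct.map_injective_of_flat_flat _ _ Subtype.val_injective Subtype.val_injective
  have pow_eq_zero : z ^ n = 0 := by
    have := Ideal.pow_mem_pow (Ideal.mem_comap.1 hz) n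
    rw [hn] at this
    exact map_injective (by rw [map_pow, map_zero]; exact this)
  exact hz0 (eq_zero_of_pow_eq_zero pow_eq_zero)

end Field

end TensorProduct

section PerfectField

variable (k A B : Type*) [Field k] [PerfectField k]

attribute [local instance] Ideal.Quotient.field in
theorem formallyUnramified_of_isReduced_of_perfectField [CommRing A] [Algebra k A]
    [Module.Finite k A] [IsReduced A] : Algebra.FormallyUnramified k A := by
  have : IsArtinianRing A := .of_finite k A
  have (I : MaximalSpectrum A) : Algebra.FormallyUnramified k (A ⧸ I.asIdeal) :=
    .of_isSeparable _ _
  exact .of_equiv ((IsArtinianRing.equivPi A).restrictScalars k).symm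

theorem isReduced_tensorProduct_of_perfectField [CommRing A] [Algebra k A] [Module.Finite k A]
    [IsReduced A] [CommRing B] [Algebra k B] [Module.Finite k B] [IsReduced B] :
    IsReduced (A ⊗[k] B) := by
  have := formallyUnramified_of_isReduced_of_perfectField k A
  have := formallyUnramified_of_isReduced_of_perfectField k B
  have := Algebra.FormallyUnramified.comp k A (A ⊗[k] B)
  exact Algebra.FormallyUnramified.isReduced_of_field k _

theorem isSemisimpleRing_tensorProduct_of_perfectField
    [Ring A] [Algebra k A] [Module.Finite k A] [IsSemisimpleRing A]
    [Ring B] [Algebra k B] [Module.Finite k B] [IsSemisimpleRing B] :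
    IsSemisimpleRing (A ⊗[k] B) := by
  have : IsArtinianRing (A ⊗[k] B) := .of_finite k _
  have : IsReduced (Subalgebra.center k A) := isReduced_center
  have : IsReduced (Subalgebra.center k B) := isReduced_center
  have := isReduced_tensorProduct_of_perfectField k (Subalgebra.center k A) (Subalgebra.center k B)
  exact isSemisimpleRing_tensorProduct_of_isReduced_center

end PerfectField

/-- `e` is a separability idempotent of the `k`-algebra `A`; one exists exactly when `A` is
separable over `k`. It is encoded as an element of `A ⊗[k] A` rather than of `A ⊗[k] Aᵐᵒᵖ`, where
it would be idempotent, so that the right action of `A` is multiplication by `1 ⊗ₜ a`. -/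
def IsSeparabilityIdempotent_s19 (k A : Type*) [CommSemiring k] [Semiring A] [Algebra k A]
    (e : A ⊗[k] A) : Prop :=
  LinearMap.mul' k A e = 1 ∧ ∀ a : A, (a ⊗ₜ[k] (1 : A)) * e = e * ((1 : A) ⊗ₜ[k] a)

theorem IsSeparabilityIdempotent_s19.projective {k A M : Type*} [CommSemiring k] [Semiring A]
    [Algebra k A] [AddCommMonoid M] [Module k M] [Module A M] [IsScalarTower k A M]
    [Module.Projective k M] {e : A ⊗[k] A} (he : IsSeparabilityIdempotent_s19 k A e) :
    Module.Projective A M := by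
  let act : A ⊗[k] M →ₗ[A] M := TensorProduct.AlgebraTensorModule.lift
    (LinearMap.toSpanSingleton A (M →ₗ[k] M) LinearMap.id)
  let tensorSMul (m : M) : A ⊗[k] A →ₗ[A] A ⊗[k] M := TensorProduct.AlgebraTensorModule.lTensor A A
    ((LinearMap.toSpanSingleton A M m).restrictScalars k)
  have tensorSMul_tmul (m x y) : tensorSMul m (x ⊗ₜ y) = x ⊗ₜ (y • m) := rfl
  have tensorSMul_add (m n t) : tensorSMul (m + n) t = tensorSMul m t + tensorSMul n t := by
    induction t with
    | zero => simp only [map_zero, add_zero]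
    | tmul x y => simp only [tensorSMul_tmul, smul_add, tmul_add]
    | add s t hs ht => simp only [map_add, hs, ht, add_add_add_comm]
  have tensorSMul_smul (a m t) : tensorSMul (a • m) t = tensorSMul m (t * (1 ⊗ₜ a)) := by
    induction t with
    | zero => simp only [zero_mul, map_zero]
    | tmul x y =>
      simp only [tensorSMul_tmul, Algebra.TensorProduct.tmul_mul_tmul, mul_one, mul_smul]
    | add s t hs ht => simp only [map_add, add_mul, hs, ht]
  have act_tensorSMul (m t) : act (tensorSMul m t) = LinearMap.mul' k A t • m := by
    induction t with
    | zero => simp only [map_zero, zero_smul]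
    | tmul x y => simp [tensorSMul_tmul, act, mul_smul]
    | add s t hs ht => simp only [map_add, add_smul, hs, ht]
  let split : M →ₗ[A] A ⊗[k] M :=
    { toFun m := tensorSMul m e
      map_add' m n := tensorSMul_add m n e
      map_smul' a m := by
        rw [tensorSMul_smul, ← he.2, tmul_one_mul_eq_smul_s19, map_smul, RingHom.id_apply] }
  exact .of_split split act (LinearMap.ext fun m ↦ by simp [split, act_tensorSMul, he.1])

theorem IsSeparabilityIdempotent_s19.isSemisimpleRing {k A : Type*} [Field k] [Ring A] [Algebra k A]
    {e : A ⊗[k] A} (he : IsSeparabilityIdempotent_s19 k A e) : IsSemisimpleRing A :=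
  isSemisimpleModule_of_forall_projective_quotient fun _ ↦ he.projective

theorem exists_isSeparabilityIdempotent {k A : Type*} [CommRing k] [Ring A] [Algebra k A]
    [IsSemisimpleRing (A ⊗[k] Aᵐᵒᵖ)] : ∃ e, IsSeparabilityIdempotent_s19 k A e := by
  let : Module (A ⊗[k] Aᵐᵒᵖ) A := instModuleTensorProductMop k A
  let μ : A ⊗[k] Aᵐᵒᵖ →ₗ[A ⊗[k] Aᵐᵒᵖ] A := LinearMap.toSpanSingleton _ A 1
  have tmul_smul_one (a b : A) : (a ⊗ₜ[k] MulOpposite.op b) • (1 : A) = a * b :=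
    congrArg (a * ·) (one_mul b)
  have μ_surjective : Function.Surjective μ := fun a ↦
    ⟨a ⊗ₜ MulOpposite.op 1, (tmul_smul_one a 1).trans (mul_one a)⟩
  have := Module.projective_of_isSemisimpleRing (A ⊗[k] Aᵐᵒᵖ) A
  obtain ⟨s, hs⟩ := Module.projective_lifting_property μ LinearMap.id μ_surjective
  let θ : A ⊗[k] Aᵐᵒᵖ ≃ₗ[k] A ⊗[k] A := (MulOpposite.opLinearEquiv k).symm.lTensor A
  have mul_θ (t : A ⊗[k] Aᵐᵒᵖ) : LinearMap.mul' k A (θ t) = μ t := by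
    induction t with
    | zero => simp only [map_zero]
    | tmul x y => exact (tmul_smul_one x y.unop).symm
    | add s t hs ht => simp only [map_add, hs, ht]
  have θ_mul (a b : A) (t) : θ ((a ⊗ₜ MulOpposite.op b) * t) = (a ⊗ₜ 1) * θ t * (1 ⊗ₜ b) := by
    induction t with
    | zero => simp only [map_zero, mul_zero, zero_mul]
    | tmul x y => simp [θ]
    | add s t hs ht => simp only [map_add, mul_add, add_mul, hs, ht]
  have θ_s_mul (a b : A) : θ (s (a * b)) = (a ⊗ₜ 1) * θ (s 1) * (1 ⊗ₜ b) := by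
    rw [← tmul_smul_one, map_smul, smul_eq_mul, θ_mul]
  refine ⟨θ (s 1), ?_, fun a ↦ ?_⟩
  · rw [mul_θ, ← LinearMap.comp_apply, hs, LinearMap.id_apply]
  · calc (a ⊗ₜ 1) * θ (s 1) = θ (s (a * 1)) := by
          rw [θ_s_mul, ← Algebra.TensorProduct.one_def, mul_one]
      _ = θ (s (1 * a)) := by rw [mul_one, one_mul]
      _ = θ (s 1) * (1 ⊗ₜ a) := by rw [θ_s_mul, ← Algebra.TensorProduct.one_def, one_mul]

theorem exists_isNearlyFrobenius_iff_exists_isSeparabilityIdempotent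
    {k A : Type*} [Field k] [Ring A] [Algebra k A] :
    (∃ Δ : A →ₗ[k] A ⊗[k] A, IsNearlyFrobenius k A Δ ∧
        LinearMap.mul' k A ∘ₗ Δ = LinearMap.id) ↔
      ∃ e, IsSeparabilityIdempotent_s19 k A e := by
  constructor
  · rintro ⟨Δ, hΔ, normalized⟩
    refine ⟨Δ 1, LinearMap.congr_fun normalized 1, fun a ↦ ?_⟩
    rw [← (hΔ a 1).1, ← (hΔ 1 a).2, mul_one, one_mul]
  · rintro ⟨e, mul_e, tmul_one_mul_e⟩
    have mul'_smul (a : A) (t : A ⊗[k] A) :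
        LinearMap.mul' k A (a • t) = a * LinearMap.mul' k A t := by
      induction t with
      | zero => simp only [smul_zero, map_zero, mul_zero]
      | tmul x y => simp only [smul_tmul', smul_eq_mul, LinearMap.mul'_apply, mul_assoc]
      | add s t hs ht => simp only [smul_add, map_add, mul_add, hs, ht]
    refine ⟨(LinearMap.toSpanSingleton A _ e).restrictScalars k, fun a b ↦ ⟨?_, ?_⟩, ?_⟩
    · rw [tmul_one_mul_eq_smul_s19]
      exact mul_smul a b e
    · change (a * b) • e = a • e * _
      rw [smul_mul_assoc, ← tmul_one_mul_e, tmul_one_mul_eq_smul_s19, mul_smul]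
    · ext a
      exact (mul'_smul a e).trans (by rw [mul_e, mul_one, LinearMap.id_apply])

/-- over a perfect field, a finite dimensional algebra is
semisimple iff it admits a normalized nearly Frobenius coproduct, iff it is
separable, iff its enveloping algebra is semisimple. -/
theorem semisimple_iff_normalized_of_perfectField (k A : Type*) [Field k]
    [PerfectField k] [Ring A] [Algebra k A] [FiniteDimensional k A] :
    (IsSemisimpleRing A ↔
      ∃ Δ : A →ₗ[k] A ⊗[k] A, IsNearlyFrobenius k A Δ ∧
        LinearMap.mul' k A ∘ₗ Δ = LinearMap.id) ∧
    (IsSemisimpleRing A ↔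
      ∃ e : A ⊗[k] A, LinearMap.mul' k A e = 1 ∧
        ∀ a : A, (a ⊗ₜ[k] (1 : A)) * e = e * ((1 : A) ⊗ₜ[k] a)) ∧
    (IsSemisimpleRing A ↔ IsSemisimpleRing (A ⊗[k] Aᵐᵒᵖ)) := by
  have enveloping : IsSemisimpleRing A → IsSemisimpleRing (A ⊗[k] Aᵐᵒᵖ) :=
    fun _ ↦ isSemisimpleRing_tensorProduct_of_perfectField k A Aᵐᵒᵖ
  have separable : IsSemisimpleRing (A ⊗[k] Aᵐᵒᵖ) → ∃ e, IsSeparabilityIdempotent_s19 k A e :=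
    fun _ ↦ exists_isSeparabilityIdempotent
  have semisimple : (∃ e, IsSeparabilityIdempotent_s19 k A e) → IsSemisimpleRing A :=
    fun ⟨_, he⟩ ↦ he.isSemisimpleRing
  have semisimple_iff : IsSemisimpleRing A ↔ ∃ e, IsSeparabilityIdempotent_s19 k A e :=
    ⟨separable ∘ enveloping, semisimple⟩
  exact ⟨semisimple_iff.trans exists_isNearlyFrobenius_iff_exists_isSeparabilityIdempotent.symm,
    semisimple_iff, enveloping, semisimple ∘ separable⟩
end
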